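/- Let K ⊂ ℝ^d satisfy b_K ⊆ K ⊆ B_K for concentric balls with diam(b_K)/diam(B_K) ≥ c₀ > 0, and let h_K = diam(K). Then for all u in the space |x − x_K|²ℙ^{p−2}(K) (shifted so the balls are centered at x_K) there holds the two-sided bound ‖Δu‖²_{L²(K)} ≃ h_K^{−2}‖∇u‖²_{L²(K)} + h_K^{−4}‖u‖²_{L²(K)}, with equivalence constants depending only on d, p and c₀. -/

import Mathlib

open MeasureTheory

/-- Componentwise Laplacian of a function on Euclidean space. -/
noncomputable def lap {d : ℕ} (f : EuclideanSpace ℝ (Fin d) → ℝ)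
    (x : EuclideanSpace ℝ (Fin d)) : ℝ :=
  ∑ i : Fin d,
    fderiv ℝ (fun y => fderiv ℝ f y (EuclideanSpace.single i 1)) x (EuclideanSpace.single i 1)

/-- Squared norm of the gradient of a function on Euclidean space. -/
noncomputable def gradSq {d : ℕ} (f : EuclideanSpace ℝ (Fin d) → ℝ)
    (x : EuclideanSpace ℝ (Fin d)) : ℝ :=
  ∑ i : Fin d, (fderiv ℝ f x (EuclideanSpace.single i 1)) ^ 2

open MvPolynomial

/-- The Fischer pairing of polynomials: monomials are orthogonal, and `x ^ m` has square
norm `m!`. -/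
noncomputable def fischerPairing {σ : Type*} [Fintype σ] (p q : MvPolynomial σ ℝ) : ℝ :=
  ∑ m ∈ p.support, (∏ i, ((m i).factorial : ℝ)) * coeff m p * coeff m q

theorem fischerPairing_eq_sum {σ : Type*} [Fintype σ] {p : MvPolynomial σ ℝ}
    {s : Finset (σ →₀ ℕ)} (hs : p.support ⊆ s) (q : MvPolynomial σ ℝ) :
    fischerPairing p q = ∑ m ∈ s, (∏ i, ((m i).factorial : ℝ)) * coeff m p * coeff m q := by
  refine Finset.sum_subset hs fun m _ hm => ?_
  rw [notMem_support_iff.1 hm, mul_zero, zero_mul]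

theorem fischerPairing_comm {σ : Type*} [Fintype σ] (p q : MvPolynomial σ ℝ) :
    fischerPairing p q = fischerPairing q p := by
  classical
  rw [fischerPairing_eq_sum (s := p.support ∪ q.support) Finset.subset_union_left,
    fischerPairing_eq_sum (s := p.support ∪ q.support) Finset.subset_union_right]
  exact Finset.sum_congr rfl fun m _ => by ring

theorem fischerPairing_sum_right {σ ι : Type*} [Fintype σ] (p : MvPolynomial σ ℝ)
    (s : Finset ι) (q : ι → MvPolynomial σ ℝ) :
    fischerPairing p (∑ i ∈ s, q i) = ∑ i ∈ s, fischerPairing p (q i) := by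
  simp only [fischerPairing, coeff_sum, Finset.mul_sum]
  exact Finset.sum_comm

theorem fischerPairing_X_mul {σ : Type*} [Fintype σ] (i : σ) (p q : MvPolynomial σ ℝ) :
    fischerPairing (X i * p) q = fischerPairing p (pderiv i q) := by
  classical
  simp only [fischerPairing, support_X_mul, Finset.sum_map, addLeftEmbedding_apply,
    coeff_X_mul, coeff_pderiv]
  refine Finset.sum_congr rfl fun m _ => ?_
  have h : ∏ j, (((Finsupp.single i 1 + m : σ →₀ ℕ) j).factorial : ℝ) =
      (m i + 1) * ∏ j, ((m j).factorial : ℝ) := by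
    rw [← Finset.mul_prod_erase Finset.univ _ (Finset.mem_univ i),
      ← Finset.mul_prod_erase Finset.univ (fun j => ((m j).factorial : ℝ)) (Finset.mem_univ i),
      ← mul_assoc]
    congr 1
    · simp [add_comm 1 (m i), Nat.factorial_succ]
    · refine Finset.prod_congr rfl fun j hj => ?_
      simp [Finsupp.single_eq_of_ne (Finset.ne_of_mem_erase hj)]
  rw [h, add_comm (Finsupp.single i 1) m]
  ring

theorem eq_zero_of_fischerPairing_self {σ : Type*} [Fintype σ] {p : MvPolynomial σ ℝ}
    (h : fischerPairing p p = 0) : p = 0 := by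
  have hw (m : σ →₀ ℕ) : 0 < ∏ i, ((m i).factorial : ℝ) :=
    Finset.prod_pos fun i _ => by positivity
  ext m
  by_contra hm
  have := (Finset.sum_eq_zero_iff_of_nonneg fun m _ => by
    rw [mul_assoc]; exact mul_nonneg (hw m).le (mul_self_nonneg _)).1 h m (mem_support_iff.2 hm)
  rw [mul_assoc] at this
  rcases mul_eq_zero.1 this with h | h
  · exact (hw m).ne' h
  · exact hm (mul_self_eq_zero.1 h)

/-- The polynomial `∑ xᵢ²`. -/
noncomputable def normSqPoly (σ : Type*) [Fintype σ] : MvPolynomial σ ℝ := ∑ i, X i * X i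

/-- The Laplacian on polynomials. -/
noncomputable def lapPoly (σ : Type*) [Fintype σ] :
    MvPolynomial σ ℝ →ₗ[ℝ] MvPolynomial σ ℝ :=
  ∑ i, (pderiv i).toLinearMap ∘ₗ (pderiv i).toLinearMap

theorem lapPoly_apply {σ : Type*} [Fintype σ] (p : MvPolynomial σ ℝ) :
    lapPoly σ p = ∑ i, pderiv i (pderiv i p) := by
  simp [lapPoly]

theorem normSqPoly_ne_zero (σ : Type*) [Fintype σ] [Nonempty σ] : normSqPoly σ ≠ 0 := by
  intro h
  have := congrArg (eval fun _ => (1 : ℝ)) h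
  simp [normSqPoly] at this

theorem eq_zero_of_lapPoly_normSqPoly_mul {σ : Type*} [Fintype σ] [Nonempty σ]
    {q : MvPolynomial σ ℝ} (h : lapPoly σ (normSqPoly σ * q) = 0) : q = 0 := by
  have key : fischerPairing (normSqPoly σ * q) (normSqPoly σ * q) =
      fischerPairing q (lapPoly σ (normSqPoly σ * q)) := by
    rw [lapPoly_apply, fischerPairing_sum_right]
    simp only [← fischerPairing_X_mul]
    conv_rhs => enter [2, i]; rw [fischerPairing_comm]
    rw [← fischerPairing_sum_right]
    conv_lhs => arg 2; rw [normSqPoly, Finset.sum_mul]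
    simp only [mul_assoc]
  have h0 : fischerPairing q 0 = 0 := by simp [fischerPairing]
  rw [h, h0] at key
  exact (mul_eq_zero.1 (eq_zero_of_fischerPairing_self key)).resolve_left
    (normSqPoly_ne_zero σ)

theorem exists_bilin_le_of_pos {V : Type*} [AddCommGroup V] [Module ℝ V] [Module.Finite ℝ V]
    (A B : V →ₗ[ℝ] V →ₗ[ℝ] ℝ) (hB : ∀ v, v ≠ 0 → 0 < B v v) :
    ∃ C : ℝ, 0 < C ∧ ∀ v, A v v ≤ C * B v v := by
  let e := (Module.finBasis ℝ V).equivFun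
  have hcont (D : V →ₗ[ℝ] V →ₗ[ℝ] ℝ) : Continuous fun x => D (e.symm x) (e.symm x) :=
    let L := (D.compl₁₂ e.symm.toLinearMap e.symm.toLinearMap).toContinuousBilinearMap
    L.continuous.clm_apply continuous_id
  have hpos : ∀ x ∈ Metric.sphere (0 : Fin (Module.finrank ℝ V) → ℝ) 1,
      0 < B (e.symm x) (e.symm x) := fun x hx => hB _ fun h => by
    rw [e.symm.map_eq_zero_iff.1 h] at hx
    simp at hx
  obtain ⟨C, hC⟩ := (isCompact_sphere (0 : Fin (Module.finrank ℝ V) → ℝ) 1).bddAbove_image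
    (f := fun x => A (e.symm x) (e.symm x) / B (e.symm x) (e.symm x))
    ((hcont A).continuousOn.div (hcont B).continuousOn fun x hx => (hpos x hx).ne')
  refine ⟨max C 1, by positivity, fun v => ?_⟩
  rcases eq_or_ne v 0 with rfl | hv
  · simp
  have hn : 0 < ‖e v‖ := norm_pos_iff.2 (e.map_ne_zero_iff.2 hv)
  have hx : ‖e v‖⁻¹ • e v ∈ Metric.sphere (0 : Fin (Module.finrank ℝ V) → ℝ) 1 := by
    simp [norm_smul, hn.ne']
  have := hC (Set.mem_image_of_mem _ hx)
  simp only [map_smul, LinearEquiv.symm_apply_apply, LinearMap.smul_apply, smul_eq_mul] at this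
  have hBv := hB v hv
  rw [mul_div_mul_left _ _ (inv_ne_zero hn.ne'), mul_div_mul_left _ _ (inv_ne_zero hn.ne'),
    div_le_iff₀ hBv] at this
  exact this.trans (by gcongr; exact le_max_left _ _)

theorem continuous_eval_euclidean {d : ℕ} (p : MvPolynomial (Fin d) ℝ) :
    Continuous fun x : EuclideanSpace ℝ (Fin d) => eval x.ofLp p :=
  (MvPolynomial.continuous_eval p).comp (PiLp.continuous_ofLp 2 _)

theorem hasFDerivAt_eval_euclidean {d : ℕ} (p : MvPolynomial (Fin d) ℝ)
    (x : EuclideanSpace ℝ (Fin d)) :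
    HasFDerivAt (fun y : EuclideanSpace ℝ (Fin d) => eval y.ofLp p)
      (∑ i, eval x.ofLp (pderiv i p) • (EuclideanSpace.proj i : _ →L[ℝ] ℝ)) x := by
  induction p using MvPolynomial.induction_on with
  | C a => simpa using hasFDerivAt_const a x
  | add p q hp hq =>
    simp only [eval_add]
    exact (hp.fun_add hq).congr_fderiv (by simp [add_smul, Finset.sum_add_distrib])
  | mul_X p i hp =>
    have hX : HasFDerivAt (fun y : EuclideanSpace ℝ (Fin d) => y.ofLp i)
        (EuclideanSpace.proj i : _ →L[ℝ] ℝ) x :=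
      (EuclideanSpace.proj i : EuclideanSpace ℝ (Fin d) →L[ℝ] ℝ).hasFDerivAt
    simp only [eval_mul, eval_X]
    refine (hp.fun_mul hX).congr_fderiv ?_
    ext v
    simp [pderiv_X, Pi.single_apply, mul_add, Finset.sum_add_distrib, Finset.mul_sum,
      apply_ite, mul_comm, mul_left_comm]

theorem fderiv_mul_eval_rescale {d : ℕ} (a s : ℝ) (c x : EuclideanSpace ℝ (Fin d))
    (p : MvPolynomial (Fin d) ℝ) (i : Fin d) :
    fderiv ℝ (fun y : EuclideanSpace ℝ (Fin d) => a * eval (s • (y - c)).ofLp p) x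
      (EuclideanSpace.single i 1) = a * s * eval (s • (x - c)).ofLp (pderiv i p) := by
  have hφ : HasFDerivAt (fun y : EuclideanSpace ℝ (Fin d) => s • (y - c))
      (s • ContinuousLinearMap.id ℝ (EuclideanSpace ℝ (Fin d))) x :=
    ((hasFDerivAt_id x).sub_const c).const_smul s
  have h : HasFDerivAt
      (fun y : EuclideanSpace ℝ (Fin d) => a * eval (s • (y - c)).ofLp p) _ x :=
    ((hasFDerivAt_eval_euclidean p (s • (x - c))).comp x hφ).const_mul a
  rw [h.fderiv]
  simp [PiLp.single_apply, mul_assoc]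

theorem lap_mul_eval_rescale {d : ℕ} (a s : ℝ) (c x : EuclideanSpace ℝ (Fin d))
    (p : MvPolynomial (Fin d) ℝ) :
    lap (fun y : EuclideanSpace ℝ (Fin d) => a * eval (s • (y - c)).ofLp p) x =
      a * s * s * eval (s • (x - c)).ofLp (lapPoly (Fin d) p) := by
  simp only [lap, fderiv_mul_eval_rescale, lapPoly_apply, map_sum, Finset.mul_sum]

theorem gradSq_mul_eval_rescale {d : ℕ} (a s : ℝ) (c x : EuclideanSpace ℝ (Fin d))
    (p : MvPolynomial (Fin d) ℝ) :
    gradSq (fun y : EuclideanSpace ℝ (Fin d) => a * eval (s • (y - c)).ofLp p) x =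
      (a * s) ^ 2 * ∑ i, eval (s • (x - c)).ofLp (pderiv i p) ^ 2 := by
  simp only [gradSq, fderiv_mul_eval_rescale, mul_pow, Finset.mul_sum]

theorem eval_normSqPoly {d : ℕ} (x : EuclideanSpace ℝ (Fin d)) :
    eval x.ofLp (normSqPoly (Fin d)) = ‖x‖ ^ 2 := by
  rw [EuclideanSpace.real_norm_sq_eq]
  simp [normSqPoly, sq]

theorem totalDegree_aeval_affine_le {σ : Type*} (q : MvPolynomial σ ℝ) (r : ℝ) (c : σ → ℝ) :
    (aeval (fun i => C r * X i + C (c i) : σ → MvPolynomial σ ℝ) q).totalDegree ≤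
      q.totalDegree := by
  have hX (i : σ) : (C r * X i + C (c i) : MvPolynomial σ ℝ).totalDegree ≤ 1 := by
    refine (totalDegree_add _ _).trans (max_le ((totalDegree_mul _ _).trans ?_) ?_) <;> simp
  rw [aeval_def, eval₂_eq]
  refine totalDegree_finsetSum_le fun m hm => (totalDegree_mul _ _).trans ?_
  rw [algebraMap_eq, totalDegree_C, zero_add]
  refine (totalDegree_finsetProd _ _).trans (le_trans (Finset.sum_le_sum fun i _ => ?_)
    (le_totalDegree hm))
  exact (totalDegree_pow _ _).trans ((Nat.mul_le_mul_left _ (hX i)).trans_eq (mul_one _))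

theorem norm_sq_mul_eval_eq_rescale {d : ℕ} (q : MvPolynomial (Fin d) ℝ) {r : ℝ} (hr : r ≠ 0)
    (c x : EuclideanSpace ℝ (Fin d)) :
    ‖x - c‖ ^ 2 * eval x.ofLp q = r ^ 2 * eval (r⁻¹ • (x - c)).ofLp
      (normSqPoly (Fin d) * aeval (fun i => C r * X i + C (c i)) q) := by
  have h : eval (r⁻¹ • (x - c)).ofLp (aeval (fun i => C r * X i + C (c i)) q) =
      eval x.ofLp q := by
    change eval _ (bind₁ _ q) = _
    rw [← coe_aeval_eq_eval, ← coe_aeval_eq_eval, RingHom.coe_coe, RingHom.coe_coe, aeval_bind₁]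
    congr 2
    ext i
    simp [hr]
  rw [eval_mul, eval_normSqPoly, h, norm_smul, mul_pow, norm_inv, Real.norm_eq_abs, inv_pow,
    sq_abs]
  field_simp

/-- The `L²` inner product of polynomials on the ball of radius `ρ` about the origin. -/
noncomputable def ballForm (d : ℕ) (ρ : ℝ) :
    MvPolynomial (Fin d) ℝ →ₗ[ℝ] MvPolynomial (Fin d) ℝ →ₗ[ℝ] ℝ :=
  have hint (p q : MvPolynomial (Fin d) ℝ) : IntegrableOn
      (fun x : EuclideanSpace ℝ (Fin d) => eval x.ofLp p * eval x.ofLp q)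
      (Metric.closedBall 0 ρ) :=
    ((continuous_eval_euclidean p).mul (continuous_eval_euclidean q)).continuousOn.integrableOn_compact
      (isCompact_closedBall _ _)
  LinearMap.mk₂ ℝ
    (fun p q => ∫ x : EuclideanSpace ℝ (Fin d) in Metric.closedBall 0 ρ,
      eval x.ofLp p * eval x.ofLp q)
    (fun p₁ p₂ q => by simp only [eval_add, add_mul, integral_add (hint p₁ q) (hint p₂ q)])
    (fun a p q => by simp only [smul_eval, mul_assoc, integral_const_mul, smul_eq_mul])
    (fun p q₁ q₂ => by simp only [eval_add, mul_add, integral_add (hint p q₁) (hint p q₂)])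
    (fun a p q => by
      simp only [smul_eval, mul_left_comm _ a, integral_const_mul, smul_eq_mul])

theorem ballForm_self {d : ℕ} (ρ : ℝ) (p : MvPolynomial (Fin d) ℝ) :
    ballForm d ρ p p =
      ∫ x : EuclideanSpace ℝ (Fin d) in Metric.closedBall 0 ρ, eval x.ofLp p ^ 2 := by
  simp only [ballForm, LinearMap.mk₂_apply, sq]

theorem ballForm_self_pos {d : ℕ} {ρ : ℝ} (hρ : 0 < ρ) {p : MvPolynomial (Fin d) ℝ}
    (hp : p ≠ 0) : 0 < ballForm d ρ p p := by
  have hcont := (continuous_eval_euclidean p).pow 2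
  obtain ⟨x, hx, hxp⟩ : ∃ x : EuclideanSpace ℝ (Fin d), x ∈ Metric.ball 0 ρ ∧
      eval x.ofLp p ≠ 0 := by
    by_contra! h
    have hU : (WithLp.toLp 2 : (Fin d → ℝ) → EuclideanSpace ℝ (Fin d)) ⁻¹' Metric.ball 0 ρ ∈
        nhds (0 : Fin d → ℝ) :=
      (PiLp.continuous_toLp 2 _).continuousAt.preimage_mem_nhds
        (by simpa using Metric.ball_mem_nhds _ hρ)
    obtain ⟨ε, hε, hsub⟩ := Metric.mem_nhds_iff.1 hU
    refine hp (MvPolynomial.funext_set (fun _ => Metric.ball 0 ε) (fun _ => ?_) fun x hx => ?_)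
    · rw [Real.ball_eq_Ioo]
      exact Set.Ioo_infinite (by linarith)
    · rw [← ball_pi _ hε] at hx
      simpa using h _ (hsub hx)
  rw [ballForm_self, setIntegral_pos_iff_support_of_nonneg_ae
    (Filter.Eventually.of_forall fun x => sq_nonneg _)
    (hcont.continuousOn.integrableOn_compact (isCompact_closedBall _ _))]
  refine lt_of_lt_of_le (IsOpen.measure_pos volume
    (hcont.isOpen_support.inter Metric.isOpen_ball) ⟨x, pow_ne_zero 2 hxp, hx⟩)
    (measure_mono (Set.inter_subset_inter_right _ Metric.ball_subset_closedBall))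

theorem setIntegral_closedBall_rescale {d : ℕ} (g : EuclideanSpace ℝ (Fin d) → ℝ)
    (c : EuclideanSpace ℝ (Fin d)) {r : ℝ} (hr : 0 < r) (ρ : ℝ) :
    ∫ x in Metric.closedBall c (r * ρ), g (r⁻¹ • (x - c)) =
      r ^ d * ∫ x in Metric.closedBall 0 ρ, g x := by
  have h₁ := (measurePreserving_sub_right volume c).setIntegral_preimage_emb
    (measurableEmbedding_subRight c) (fun x => g (r⁻¹ • x)) (Metric.closedBall 0 (r * ρ))
  have h₂ : (fun x => x - c) ⁻¹' Metric.closedBall 0 (r * ρ) = Metric.closedBall c (r * ρ) := by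
    ext; simp [dist_eq_norm]
  rw [h₂] at h₁
  rw [h₁, Measure.setIntegral_comp_smul_of_pos _ _ _ (inv_pos.2 hr), smul_closedBall' ]
  · simp [hr.ne', abs_of_pos hr]
  · exact (inv_pos.2 hr).ne'

section Element

variable {d : ℕ} {K : Set (EuclideanSpace ℝ (Fin d))} {c : EuclideanSpace ℝ (Fin d)} {r : ℝ}

theorem integrableOn_eval_rescale_sq (hK : K ⊆ Metric.closedBall c r)
    (p : MvPolynomial (Fin d) ℝ) :
    IntegrableOn (fun x => eval (r⁻¹ • (x - c)).ofLp p ^ 2) K :=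
  have hcont : Continuous fun x => eval (r⁻¹ • (x - c)).ofLp p ^ 2 :=
    ((continuous_eval_euclidean p).comp (by fun_prop)).pow 2
  (hcont.continuousOn.integrableOn_compact (isCompact_closedBall c r)).mono_set hK

theorem setIntegral_eval_rescale_sq_le (hr : 0 < r) (hK : K ⊆ Metric.closedBall c r)
    (p : MvPolynomial (Fin d) ℝ) :
    ∫ x in K, eval (r⁻¹ • (x - c)).ofLp p ^ 2 ≤ r ^ d * ballForm d 1 p p := by
  rw [ballForm_self, ← setIntegral_closedBall_rescale (fun x => eval x.ofLp p ^ 2) c hr, mul_one]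
  exact setIntegral_mono_set (integrableOn_eval_rescale_sq subset_rfl p)
    (Filter.Eventually.of_forall fun x => sq_nonneg _) hK.eventuallyLE

theorem le_setIntegral_eval_rescale_sq {ρ : ℝ} (hr : 0 < r) (hK : K ⊆ Metric.closedBall c r)
    (hρ : Metric.closedBall c (r * ρ) ⊆ K) (p : MvPolynomial (Fin d) ℝ) :
    r ^ d * ballForm d ρ p p ≤ ∫ x in K, eval (r⁻¹ • (x - c)).ofLp p ^ 2 := by
  rw [ballForm_self, ← setIntegral_closedBall_rescale (fun x => eval x.ofLp p ^ 2) c hr]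
  exact setIntegral_mono_set (integrableOn_eval_rescale_sq hK p)
    (Filter.Eventually.of_forall fun x => sq_nonneg _) hρ.eventuallyLE

end Element

theorem exists_ballForm_comp_le {d n : ℕ} {ρ : ℝ} (hρ : 0 < ρ) {ι : Type*} (s : Finset ι)
    (S : ι → MvPolynomial (Fin d) ℝ →ₗ[ℝ] MvPolynomial (Fin d) ℝ)
    (T : MvPolynomial (Fin d) ℝ →ₗ[ℝ] MvPolynomial (Fin d) ℝ)
    (hT : ∀ q, T q = 0 → q = 0) :
    ∃ C : ℝ, 0 < C ∧ ∀ q : MvPolynomial (Fin d) ℝ, q.totalDegree ≤ n →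
      ∑ i ∈ s, ballForm d 1 (S i q) (S i q) ≤ C * ballForm d ρ (T q) (T q) := by
  let J := (restrictTotalDegree (Fin d) ℝ n).subtype
  obtain ⟨C, hC, h⟩ := exists_bilin_le_of_pos
    (∑ i ∈ s, (ballForm d 1).compl₁₂ (S i ∘ₗ J) (S i ∘ₗ J))
    ((ballForm d ρ).compl₁₂ (T ∘ₗ J) (T ∘ₗ J))
    (fun q hq => ballForm_self_pos hρ fun h => hq (Subtype.ext (hT _ h)))
  refine ⟨C, hC, fun q hq => ?_⟩
  simpa [J] using h ⟨q, (mem_restrictTotalDegree _ _ _).2 hq⟩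

/-- On a shape-regular element `K` (sandwiched between concentric balls of comparable
radii), for `u = |x − x_K|² q` with `deg q ≤ p − 2`, there holds
`‖Δu‖² ≃ h_K⁻²‖∇u‖² + h_K⁻⁴‖u‖²`, with constants depending only on `d, p, c₀`. -/
theorem stmt10 (d p : ℕ) (c₀ : ℝ) (hc₀ : 0 < c₀) :
    ∃ c C : ℝ, 0 < c ∧ 0 < C ∧
      ∀ (K : Set (EuclideanSpace ℝ (Fin d))) (xK : EuclideanSpace ℝ (Fin d)) (r₁ r₂ : ℝ),
        MeasurableSet K → 0 < r₁ →
        Metric.closedBall xK r₁ ⊆ K → K ⊆ Metric.closedBall xK r₂ →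
        c₀ * (2 * r₂) ≤ 2 * r₁ →
        ∀ q : MvPolynomial (Fin d) ℝ, q.totalDegree ≤ p - 2 →
          let hK : ℝ := Metric.diam K
          let u : EuclideanSpace ℝ (Fin d) → ℝ :=
            fun x => ‖x - xK‖ ^ 2 * MvPolynomial.eval (fun i => x i) q
          c * (hK ^ (-2 : ℤ) * (∫ x in K, gradSq u x) +
                hK ^ (-4 : ℤ) * ∫ x in K, (u x) ^ 2) ≤
              (∫ x in K, (lap u x) ^ 2) ∧
            (∫ x in K, (lap u x) ^ 2) ≤
              C * (hK ^ (-2 : ℤ) * (∫ x in K, gradSq u x) +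
                hK ^ (-4 : ℤ) * ∫ x in K, (u x) ^ 2) := by
  rcases isEmpty_or_nonempty (Fin d) with hd | hd
  · refine ⟨1, 1, one_pos, one_pos, fun K xK r₁ r₂ _ _ _ _ _ q _ => ?_⟩
    have h (x : EuclideanSpace ℝ (Fin d)) : x - xK = 0 := Subsingleton.elim _ _
    simp [lap, gradSq, h]
  let N : MvPolynomial (Fin d) ℝ →ₗ[ℝ] MvPolynomial (Fin d) ℝ :=
    LinearMap.mulLeft ℝ (normSqPoly (Fin d))
  have hN (q : MvPolynomial (Fin d) ℝ) : N q = 0 → q = 0 := fun h =>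
    (mul_eq_zero.1 h).resolve_left (normSqPoly_ne_zero _)
  obtain ⟨C₁, hC₁, h₁⟩ := exists_ballForm_comp_le (n := p - 2) hc₀ Finset.univ
    (fun i : Option (Fin d) => (i.elim LinearMap.id fun j => (pderiv j).toLinearMap) ∘ₗ N)
    (lapPoly (Fin d) ∘ₗ N) (fun q => eq_zero_of_lapPoly_normSqPoly_mul)
  obtain ⟨C₂, hC₂, h₂⟩ := exists_ballForm_comp_le (n := p - 2) hc₀ {()}
    (fun _ => lapPoly (Fin d) ∘ₗ N) N hN
  set α : ℝ := (4 * c₀ ^ 2)⁻¹ with hα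
  have hα0 : 0 < α := by positivity
  refine ⟨((α + α ^ 2) * C₁)⁻¹, 16 * C₂, by positivity, by positivity, ?_⟩
  intro K xK r₁ r _ hr₁ hK₁ hK hcr q hq hK' u
  have hr : 0 < r := by
    have hx : xK ∈ Metric.closedBall xK r := hK (hK₁ (Metric.mem_closedBall_self hr₁.le))
    have : Metric.diam (Metric.closedBall xK r₁) ≤ Metric.diam (Metric.closedBall xK r) :=
      Metric.diam_mono (hK₁.trans hK) Metric.isBounded_closedBall
    rw [Metric.diam_closedBall_eq _ hr₁.le, Metric.diam_closedBall_eq _ (by simpa using hx)] at this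
    linarith
  have hρ : Metric.closedBall xK (r * c₀) ⊆ K :=
    (Metric.closedBall_subset_closedBall (by linarith)).trans hK₁
  have hh₁ : 2 * (c₀ * r) ≤ hK' := by
    rw [← Metric.diam_closedBall_eq xK (by positivity), mul_comm c₀]
    exact Metric.diam_mono hρ (Metric.isBounded_closedBall.subset hK)
  have hh₂ : hK' ≤ 2 * r := by
    rw [← Metric.diam_closedBall_eq xK hr.le]
    exact Metric.diam_mono hK Metric.isBounded_closedBall
  have hh : 0 < hK' := lt_of_lt_of_le (by positivity) hh₁
  clear_value hK'
  set Q : MvPolynomial (Fin d) ℝ := aeval (fun i => C r * X i + C (xK i)) q with hQ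
  have hQd : Q.totalDegree ≤ p - 2 := (totalDegree_aeval_affine_le q r _).trans hq
  have hu : u = fun x => r ^ 2 * eval (r⁻¹ • (x - xK)).ofLp (N Q) :=
    funext fun x => norm_sq_mul_eval_eq_rescale q hr.ne' xK x
  let J (P : MvPolynomial (Fin d) ℝ) : ℝ := ∫ x in K, eval (r⁻¹ • (x - xK)).ofLp P ^ 2
  have hJ0 (P : MvPolynomial (Fin d) ℝ) : 0 ≤ J P := integral_nonneg fun x => sq_nonneg _
  have hJle (P : MvPolynomial (Fin d) ℝ) : J P ≤ r ^ d * ballForm d 1 P P :=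
    setIntegral_eval_rescale_sq_le hr hK P
  have hleJ (P : MvPolynomial (Fin d) ℝ) : r ^ d * ballForm d c₀ P P ≤ J P :=
    le_setIntegral_eval_rescale_sq hr hK hρ P
  have hL : ∫ x in K, lap u x ^ 2 = J (lapPoly (Fin d) (N Q)) := by
    simp only [hu, lap_mul_eval_rescale, J]
    congr! 4
    field_simp
  have hM : ∫ x in K, u x ^ 2 = r ^ 4 * J (N Q) := by
    simp only [hu, mul_pow, integral_const_mul, J, ← pow_mul]
  have hG : ∫ x in K, gradSq u x = r ^ 2 * ∑ i, J (pderiv i (N Q)) := by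
    simp only [hu, gradSq_mul_eval_rescale, integral_const_mul, J]
    rw [integral_finsetSum _ fun i _ => integrableOn_eval_rescale_sq hK _]
    congr 2
    field_simp
  rw [hL, hM, hG]
  have hG0 : 0 ≤ ∑ i, J (pderiv i (N Q)) := Finset.sum_nonneg fun i _ => hJ0 _
  have e₁ : J (N Q) + ∑ i, J (pderiv i (N Q)) ≤ C₁ * J (lapPoly (Fin d) (N Q)) := by
    have h := h₁ Q hQd
    rw [Fintype.sum_option] at h
    calc J (N Q) + ∑ i, J (pderiv i (N Q))
        ≤ r ^ d * ballForm d 1 (N Q) (N Q) +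
            ∑ i, r ^ d * ballForm d 1 (pderiv i (N Q)) (pderiv i (N Q)) :=
          add_le_add (hJle _) (Finset.sum_le_sum fun i _ => hJle _)
      _ ≤ r ^ d * (C₁ * ballForm d c₀ (lapPoly (Fin d) (N Q)) (lapPoly (Fin d) (N Q))) := by
          rw [← Finset.mul_sum, ← mul_add]
          exact mul_le_mul_of_nonneg_left h (by positivity)
      _ = C₁ * (r ^ d * ballForm d c₀ (lapPoly (Fin d) (N Q)) (lapPoly (Fin d) (N Q))) := by ring
      _ ≤ _ := mul_le_mul_of_nonneg_left (hleJ _) hC₁.le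
  have e₂ : J (lapPoly (Fin d) (N Q)) ≤ C₂ * J (N Q) := by
    have h := h₂ Q hQd
    rw [Finset.sum_singleton] at h
    calc J (lapPoly (Fin d) (N Q))
        ≤ r ^ d * (C₂ * ballForm d c₀ (N Q) (N Q)) :=
          (hJle _).trans (mul_le_mul_of_nonneg_left h (by positivity))
      _ = C₂ * (r ^ d * ballForm d c₀ (N Q) (N Q)) := by ring
      _ ≤ _ := mul_le_mul_of_nonneg_left (hleJ _) hC₂.le
  have hz₂ : hK' ^ (-2 : ℤ) * r ^ 2 = (r / hK') ^ 2 := by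
    rw [zpow_neg, div_pow, div_eq_inv_mul]; norm_cast
  have hz₄ : hK' ^ (-4 : ℤ) * r ^ 4 = ((r / hK') ^ 2) ^ 2 := by
    rw [zpow_neg, ← pow_mul, div_pow, div_eq_inv_mul]; norm_cast
  have ht₁ : (r / hK') ^ 2 ≤ α := by
    have : r / hK' ≤ (2 * c₀)⁻¹ := by
      rw [div_le_iff₀ hh, inv_mul_eq_div, le_div_iff₀ (by positivity)]
      linarith
    calc (r / hK') ^ 2 ≤ ((2 * c₀)⁻¹) ^ 2 := by gcongr
      _ = α := by rw [hα, inv_pow]; ring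
  have ht₂ : 1 / 4 ≤ (r / hK') ^ 2 := by
    have : 1 / 2 ≤ r / hK' := by rw [le_div_iff₀ hh]; linarith
    nlinarith
  rw [← mul_assoc, ← mul_assoc, hz₂, hz₄]
  generalize (r / hK') ^ 2 = t at ht₁ ht₂
  constructor
  · rw [inv_mul_le_iff₀ (by positivity)]
    calc t * ∑ i, J (pderiv i (N Q)) + t ^ 2 * J (N Q)
        ≤ (α + α ^ 2) * ∑ i, J (pderiv i (N Q)) + (α + α ^ 2) * J (N Q) := by
          have : t ^ 2 ≤ α ^ 2 := by gcongr
          exact add_le_add (mul_le_mul_of_nonneg_right (by nlinarith) hG0)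
            (mul_le_mul_of_nonneg_right (by linarith) (hJ0 _))
      _ = (α + α ^ 2) * (J (N Q) + ∑ i, J (pderiv i (N Q))) := by ring
      _ ≤ (α + α ^ 2) * (C₁ * J (lapPoly (Fin d) (N Q))) :=
          mul_le_mul_of_nonneg_left e₁ (by positivity)
      _ = _ := by ring
  · calc J (lapPoly (Fin d) (N Q)) ≤ C₂ * J (N Q) := e₂
      _ ≤ C₂ * (16 * (t ^ 2 * J (N Q))) := by
          have := mul_le_mul_of_nonneg_right (by nlinarith : 1 ≤ 16 * t ^ 2) (hJ0 (N Q))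
          exact mul_le_mul_of_nonneg_left (by linarith) hC₂.le
      _ = 16 * C₂ * (0 + t ^ 2 * J (N Q)) := by ring
      _ ≤ _ := by gcongr; exact mul_nonneg (by linarith) hG0
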